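/- Let p₁, …, p_{2r−1} (r ≥ 1) be distinct prime numbers and let d = p₁⋯p_{2r−1}. Let p be a prime number with p ∤ d, p ≡ 3 (mod 8), and such that −p is a quadratic non-residue modulo p_i for every odd p_i dividing d. Then: for every prime number q, the quaternion algebra ℍ[ℚ_q, −p, −d] is a division ring if and only if q divides d; moreover ℍ[ℝ, −p, −d] is a division ring. (Hence ℍ[ℚ,−p,−d] is the definite rational quaternion algebra with discriminant d.) -/

import Mathlib

open Quaternion

/-- A ring is a division ring if it is nontrivial and every nonzero element is invertible. -/
def IsDivisionRingPred (A : Type*) [Ring A] : Prop :=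
  (1 : A) ≠ 0 ∧ ∀ x : A, x ≠ 0 → IsUnit x

theorem div_iff {K : Type*} [Field K] (a b : K) :
    IsDivisionRingPred ℍ[K, -a, -b] ↔
      ∀ x y z w : K, x^2 + a*y^2 + b*(z^2 + a*w^2) = 0 → x = 0 ∧ y = 0 ∧ z = 0 ∧ w = 0 := by
  have key : ∀ x y z w : K, (⟨x, y, z, w⟩ : ℍ[K, -a, -b]) * ⟨x, -y, -z, -w⟩
      = ((x^2 + a*y^2 + b*(z^2 + a*w^2) : K) : ℍ[K, -a, -b]) := by
    intro x y z w
    obtain ⟨n, hn⟩ : ∃ n, n = x^2 + a*y^2 + b*(z^2 + a*w^2) := ⟨_, rfl⟩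
    rw [← hn]
    ext
    · simp only [QuaternionAlgebra.re_mul, QuaternionAlgebra.re_coe, hn]; ring
    all_goals simp
    all_goals ring
  constructor
  · rintro ⟨_, h⟩ x y z w h0
    by_contra hne
    have hx : (⟨x, y, z, w⟩ : ℍ[K, -a, -b]) ≠ 0 := by
      intro he
      apply hne
      have := QuaternionAlgebra.ext_iff.1 he
      simpa using this
    have hu := h _ hx
    have k := key x y z w
    rw [h0, QuaternionAlgebra.coe_zero, hu.mul_right_eq_zero] at k
    apply hne
    have := QuaternionAlgebra.ext_iff.1 k
    simpa using this
  · intro h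
    refine ⟨one_ne_zero, ?_⟩
    rintro ⟨x, y, z, w⟩ hx
    have hn : x^2 + a*y^2 + b*(z^2 + a*w^2) ≠ 0 := by
      intro h0
      obtain ⟨rfl, rfl, rfl, rfl⟩ := h x y z w h0
      exact hx rfl
    set n := x^2 + a*y^2 + b*(z^2 + a*w^2) with hnd
    have k1 := key x y z w
    have k2 := key x (-y) (-z) (-w)
    simp only [neg_neg, even_two, Even.neg_pow] at k2
    rw [← hnd] at k1 k2
    refine ⟨⟨⟨x, y, z, w⟩, ⟨x, -y, -z, -w⟩ * ((n⁻¹ : K) : ℍ[K, -a, -b]), ?_, ?_⟩, rfl⟩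
    · rw [← mul_assoc, k1, ← QuaternionAlgebra.coe_mul, mul_inv_cancel₀ hn, QuaternionAlgebra.coe_one]
    · rw [← (QuaternionAlgebra.coe_commutes (n⁻¹) _), mul_assoc, k2, ← QuaternionAlgebra.coe_mul, inv_mul_cancel₀ hn, QuaternionAlgebra.coe_one]


theorem norm_eq_one_of_toZMod {q : ℕ} [Fact q.Prime] {a : ℤ_[q]}
    (h : PadicInt.toZMod a ≠ 0) : ‖a‖ = 1 := by
  rw [← PadicInt.isUnit_iff]
  by_contra hu
  apply h
  rw [← RingHom.mem_ker, PadicInt.ker_toZMod, IsLocalRing.mem_maximalIdeal]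
  exact hu

theorem norm_lt_one_of_toZMod {q : ℕ} [Fact q.Prime] {a : ℤ_[q]}
    (h : PadicInt.toZMod a = 0) : ‖a‖ < 1 := by
  rw [← RingHom.mem_ker, PadicInt.ker_toZMod, IsLocalRing.mem_maximalIdeal] at h
  exact PadicInt.mem_nonunits.1 h

theorem sq_hensel (q : ℕ) [Fact q.Prime] (a s : ℤ_[q]) (h : ‖s^2 - a‖ < ‖2 * s‖^2) :
    ∃ t : ℤ_[q], t^2 = a := by
  obtain ⟨z, hz, -⟩ := hensels_lemma (p := q) (R := ℤ_[q])
    (F := Polynomial.X^2 - Polynomial.C a) (a := s) (by simpa [one_add_one_eq_two] using h)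
  refine ⟨z, ?_⟩
  simpa [sub_eq_zero] using hz

theorem sq_odd (q : ℕ) [Fact q.Prime] (hq : q ≠ 2) (a : ℤ_[q]) (s : ZMod q) (hs : s ≠ 0)
    (h : PadicInt.toZMod a = s^2) : ∃ t : ℤ_[q], t^2 = a := by
  obtain ⟨s', rfl⟩ := ZMod.ringHom_surjective (PadicInt.toZMod (p := q)) s
  apply sq_hensel q a s'
  have h2 : (2 : ZMod q) ≠ 0 := by
    intro h2
    have : ((2 : ℕ) : ZMod q) = 0 := by exact_mod_cast h2
    rw [ZMod.natCast_eq_zero_iff] at this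
    exact hq ((Nat.prime_dvd_prime_iff_eq Fact.out Nat.prime_two).1 this)
  rw [norm_eq_one_of_toZMod (a := 2 * s') (by
    rw [map_mul, map_ofNat]; exact mul_ne_zero h2 hs)]
  simpa using norm_lt_one_of_toZMod (a := s'^2 - a) (by simp [h])

theorem two_norm_le (a : ℤ_[2]) (n : ℕ) (h : PadicInt.toZModPow n a = 0) :
    ‖a‖ ≤ (2:ℝ)^(-(n:ℤ)) := by
  rw [← RingHom.mem_ker, PadicInt.ker_toZModPow] at h
  simpa using (PadicInt.norm_le_pow_iff_mem_span_pow a n).2 h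

theorem two_norm_two : ‖(2 : ℤ_[2])‖ = 1/2 := by
  simpa using PadicInt.norm_p (p := 2)

theorem sq_two (a : ℤ_[2]) (h : PadicInt.toZModPow 3 a = 1) : ∃ t : ℤ_[2], t^2 = a := by
  apply sq_hensel 2 a 1
  have := two_norm_le (1 ^ 2 - a) 3 (by simp [h])
  rw [mul_one, two_norm_two]
  refine this.trans_lt ?_
  norm_num

/-- values of `u² + p` have even valuation -/
theorem even_odd (q p : ℕ) [Fact q.Prime] (hn : ¬ IsSquare (-(p : ZMod q))) (u : ℤ_[q]) :
    ∃ t : ℚ_[q], t ≠ 0 ∧ ‖u^2 + (p : ℤ_[q])‖ = ‖t‖^2 := by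
  refine ⟨1, one_ne_zero, ?_⟩
  rw [norm_one, one_pow]
  apply norm_eq_one_of_toZMod
  intro h
  apply hn
  refine ⟨PadicInt.toZMod u, ?_⟩
  simp only [map_add, map_pow, map_natCast] at h
  linear_combination -h

theorem even_two' (p : ℕ) (hp : p % 8 = 3) (u : ℤ_[2]) :
    ∃ t : ℚ_[2], t ≠ 0 ∧ ‖u^2 + (p : ℤ_[2])‖ = ‖t‖^2 := by
  have hp' : (p : ZMod (2^3)) = 3 := by
    have : ((p : ℕ) : ZMod (2^3)) = ((3 : ℕ) : ZMod (2^3)) := by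
      rw [ZMod.natCast_eq_natCast_iff]; exact hp
    simpa using this
  have h8 : ∀ v : ZMod (2^3), (∃ w, (v^2+3) * w = 1) ∨ v^2 + 3 = 4 := by decide
  rcases h8 (PadicInt.toZModPow 3 u) with ⟨w, h⟩ | h
  · refine ⟨1, one_ne_zero, ?_⟩
    rw [norm_one, one_pow]
    by_contra hne
    have hlt : ‖u^2 + (p : ℤ_[2])‖ < 1 := lt_of_le_of_ne (PadicInt.norm_le_one _) hne
    rw [PadicInt.norm_lt_one_iff_dvd] at hlt
    obtain ⟨c, hc⟩ := hlt
    have := congrArg (PadicInt.toZModPow 3) hc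
    simp only [map_add, map_pow, map_natCast, map_mul, hp'] at this
    rw [this] at h
    revert h
    generalize PadicInt.toZModPow 3 c = c'
    revert c' w
    decide
  · refine ⟨2, two_ne_zero, ?_⟩
    have h1 := two_norm_le (u^2 + p - 4) 3 (by
      simp only [map_sub, map_add, map_pow, map_natCast, hp', h]
      have : (4 : ℤ_[2]) = ((4 : ℕ) : ℤ_[2]) := by norm_cast
      rw [this, map_natCast]; rfl)
    have h4 : ‖(4 : ℤ_[2])‖ = 1/4 := by
      have : (4 : ℤ_[2]) = 2 * 2 := by norm_num
      rw [this, norm_mul, two_norm_two]; norm_num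
    have h2 : ‖(2 : ℚ_[2])‖ = 1/2 := by simpa using Padic.norm_p (p := 2)
    have hlt : ‖u^2 + (p:ℤ_[2]) - 4‖ < ‖(4 : ℤ_[2])‖ := by
      rw [h4]; refine h1.trans_lt (by norm_num)
    have := PadicInt.norm_add_eq_max_of_ne hlt.ne
    rw [sub_add_cancel, max_eq_right hlt.le, h4] at this
    rw [this, h2]; norm_num

theorem even_all (q p : ℕ) [Fact q.Prime]
    (H : ∀ u : ℤ_[q], ∃ t : ℚ_[q], t ≠ 0 ∧ ‖u^2 + (p : ℤ_[q])‖ = ‖t‖^2)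
    (x y : ℚ_[q]) (hxy : ¬ (x = 0 ∧ y = 0)) :
    ∃ t : ℚ_[q], t ≠ 0 ∧ ‖x^2 + (p : ℚ_[q]) * y^2‖ = ‖t‖^2 := by
  by_cases hy : y = 0
  · subst hy
    exact ⟨x, by simpa using hxy, by simp⟩
  have main : ∀ u : ℚ_[q], ∃ t : ℚ_[q], t ≠ 0 ∧ ‖u^2 + (p : ℚ_[q])‖ = ‖t‖^2 := by
    intro u
    by_cases hu : ‖u‖ ≤ 1
    · obtain ⟨t, h0, ht⟩ := H ⟨u, hu⟩
      refine ⟨t, h0, ?_⟩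
      rw [← ht, PadicInt.norm_def]
      push_cast
      rfl
    · push Not at hu
      have hlt : ‖(p : ℚ_[q])‖ < ‖u^2‖ := by
        have hle : ‖(p : ℚ_[q])‖ ≤ 1 := by simpa using Padic.norm_int_le_one (p := q) (p : ℤ)
        refine hle.trans_lt ?_
        rw [norm_pow]; exact one_lt_pow₀ hu two_ne_zero
      refine ⟨u, ?_, ?_⟩
      · rintro rfl; norm_num at hu
      · rw [Padic.add_eq_max_of_ne hlt.ne', max_eq_left hlt.le, norm_pow]
  obtain ⟨t, h0, ht⟩ := main (x / y)
  refine ⟨t * y, mul_ne_zero h0 hy, ?_⟩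
  have : x^2 + (p : ℚ_[q]) * y^2 = ((x/y)^2 + p) * y^2 := by field_simp
  rw [this, norm_mul, ht, norm_mul, norm_pow, mul_pow]

theorem aniso (q p d : ℕ) [Fact q.Prime]
    (H : ∀ u : ℤ_[q], ∃ t : ℚ_[q], t ≠ 0 ∧ ‖u^2 + (p : ℤ_[q])‖ = ‖t‖^2)
    (m : ℕ) (hd : d = q * m) (hm : ¬ q ∣ m) (x y z w : ℚ_[q])
    (h : x^2 + (p : ℚ_[q])*y^2 + (d : ℚ_[q])*(z^2 + p*w^2) = 0) :
    x = 0 ∧ y = 0 ∧ z = 0 ∧ w = 0 := by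
  have hq : q.Prime := Fact.out
  have hdn : ‖(d : ℚ_[q])‖ = (q : ℝ)⁻¹ := by
    rw [hd, Nat.cast_mul, norm_mul, Padic.norm_p,
      Padic.norm_natCast_eq_one_iff.2 ((Nat.Prime.coprime_iff_not_dvd hq).2 hm), mul_one]
  have hd0 : (d : ℚ_[q]) ≠ 0 := by
    rw [← norm_ne_zero_iff, hdn]
    exact inv_ne_zero (Nat.cast_ne_zero.2 hq.ne_zero)
  have z0 : ∀ a b : ℚ_[q], a^2 + p * b^2 = 0 → a = 0 ∧ b = 0 := by
    intro a b hab
    by_contra hne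
    obtain ⟨t, ht, h1⟩ := even_all q p H a b hne
    rw [hab, norm_zero] at h1
    exact ht (norm_eq_zero.1 (pow_eq_zero_iff two_ne_zero |>.1 h1.symm))
  by_cases hzw : z = 0 ∧ w = 0
  · obtain ⟨rfl, rfl⟩ := hzw
    have := z0 x y (by simpa using h)
    simp [this]
  exfalso
  by_cases hxy : x = 0 ∧ y = 0
  · obtain ⟨rfl, rfl⟩ := hxy
    apply hzw
    apply z0
    simpa [hd0] using h
  obtain ⟨s, hs, h1⟩ := even_all q p H x y hxy
  obtain ⟨t, ht, h2⟩ := even_all q p H z w hzw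
  have h3 : ‖s‖^2 = (q:ℝ)⁻¹ * ‖t‖^2 := by
    rw [← h1, ← h2, ← hdn, ← norm_mul, eq_neg_of_add_eq_zero_left h, norm_neg]
  have hq1 : (1:ℝ) < q := by exact_mod_cast hq.one_lt
  have hq0 : (q:ℝ) ≠ 0 := by positivity
  rw [Padic.norm_eq_zpow_neg_valuation hs, Padic.norm_eq_zpow_neg_valuation ht, ← zpow_natCast,
    ← zpow_natCast, ← zpow_mul, ← zpow_mul, ← zpow_neg_one, ← zpow_add₀ hq0] at h3
  have := zpow_right_injective₀ (by positivity) hq1.ne' h3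
  push_cast at this
  omega

theorem iso_odd (q p d : ℕ) [Fact q.Prime] (hq : q ≠ 2) (hp : ¬ q ∣ p) (hd : ¬ q ∣ d) :
    ∃ x y : ℚ_[q], x^2 + (p : ℚ_[q])*y^2 + d = 0 := by
  have hp' : (p : ZMod q) ≠ 0 := by rwa [Ne, ZMod.natCast_eq_zero_iff]
  have hd' : (d : ZMod q) ≠ 0 := by rwa [Ne, ZMod.natCast_eq_zero_iff]
  have hpQ : (p : ℚ_[q]) ≠ 0 := by
    rw [Nat.cast_ne_zero]; rintro rfl; simp at hp
  obtain ⟨a, b, hab⟩ := FiniteField.exists_root_sum_quadratic (R := ZMod q)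
    (f := Polynomial.X^2 + Polynomial.C (d : ZMod q))
    (g := Polynomial.C (p : ZMod q) * Polynomial.X^2)
    (Polynomial.degree_X_pow_add_C (by norm_num) _)
    (Polynomial.degree_C_mul_X_pow 2 hp')
    (by rw [ZMod.card]; exact (Nat.Prime.mod_two_eq_one_iff_ne_two Fact.out).2 hq)
  simp only [Polynomial.eval_add, Polynomial.eval_pow, Polynomial.eval_X, Polynomial.eval_C,
    Polynomial.eval_mul] at hab
  obtain ⟨a', rfl⟩ := ZMod.ringHom_surjective (PadicInt.toZMod (p := q)) a
  obtain ⟨b', rfl⟩ := ZMod.ringHom_surjective (PadicInt.toZMod (p := q)) b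
  by_cases ha : PadicInt.toZMod a' = 0
  · have hb : PadicInt.toZMod b' ≠ 0 := by
      intro hb
      apply hd'
      simpa [ha, hb] using hab
    obtain ⟨t, ht⟩ := sq_odd q hq (-p * (d + a'^2)) (p * PadicInt.toZMod b') (mul_ne_zero hp' hb)
      (by simp only [map_mul, map_neg, map_add, map_pow, map_natCast]
          linear_combination (-(p : ZMod q)) * hab)
    refine ⟨a', t / p, ?_⟩
    have ht' : (t : ℚ_[q])^2 = -p * (d + a'^2) := by exact_mod_cast congrArg (Subtype.val) ht
    field_simp
    rw [ht']; ring
  · obtain ⟨t, ht⟩ := sq_odd q hq (-d - p * b'^2) _ ha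
      (by simp only [map_mul, map_neg, map_sub, map_pow, map_natCast]
          linear_combination -hab)
    refine ⟨t, b', ?_⟩
    have ht' : (t : ℚ_[q])^2 = -d - p * b'^2 := by exact_mod_cast congrArg (Subtype.val) ht
    rw [ht']; ring

theorem iso_two (p d : ℕ) (hp : p % 8 = 3) (hd : ¬ 2 ∣ d) :
    ∃ x y : ℚ_[2], x^2 + (p : ℚ_[2])*y^2 + d = 0 := by
  have hp' : (p : ZMod (2^3)) = 3 := by
    have : ((p : ℕ) : ZMod (2^3)) = ((3 : ℕ) : ZMod (2^3)) := by
      rw [ZMod.natCast_eq_natCast_iff]; exact hp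
    simpa using this
  have hpQ : (p : ℚ_[2]) ≠ 0 := by
    rw [Nat.cast_ne_zero]; rintro rfl; simp at hp
  have hd' : (d : ZMod (2^3)) = ((d % 8 : ℕ) : ZMod (2^3)) := by
    rw [ZMod.natCast_eq_natCast_iff]; exact (Nat.mod_mod _ _).symm
  have A : ∀ n : ℕ, -(d : ZMod (2^3)) - 3 * (n : ZMod (2^3))^2 = 1 →
      ∃ x y : ℚ_[2], x^2 + (p : ℚ_[2])*y^2 + d = 0 := by
    intro n hn
    obtain ⟨t, ht⟩ := sq_two (-d - p * (n:ℤ_[2])^2)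
      (by simp only [map_mul, map_neg, map_sub, map_pow, map_natCast, hp']; exact hn)
    refine ⟨t, n, ?_⟩
    have ht' : (t : ℚ_[2])^2 = -d - p * (n:ℚ_[2])^2 := by
      have := congrArg (fun a : ℤ_[2] => (a : ℚ_[2])) ht
      simpa using this
    rw [ht']; ring
  have B : ∀ n : ℕ, -3 * ((d : ZMod (2^3)) + (n : ZMod (2^3))^2) = 1 →
      ∃ x y : ℚ_[2], x^2 + (p : ℚ_[2])*y^2 + d = 0 := by
    intro n hn
    obtain ⟨t, ht⟩ := sq_two (-p * (d + (n:ℤ_[2])^2))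
      (by simp only [map_mul, map_neg, map_add, map_pow, map_natCast, hp']; exact hn)
    refine ⟨n, t / p, ?_⟩
    have ht' : (t : ℚ_[2])^2 = -p * (d + (n:ℚ_[2])^2) := by
      have := congrArg (fun a : ℤ_[2] => (a : ℚ_[2])) ht
      simpa using this
    field_simp
    rw [ht']; ring
  have : d % 8 = 1 ∨ d % 8 = 3 ∨ d % 8 = 5 ∨ d % 8 = 7 := by omega
  rcases this with h | h | h | h <;> rw [h] at hd'
  · exact B 2 (by rw [hd']; decide)
  · exact A 2 (by rw [hd']; decide)
  · exact B 0 (by rw [hd']; decide)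
  · exact A 0 (by rw [hd']; decide)

theorem leg_neg (p l : ℕ) [Fact p.Prime] [Fact l.Prime] (hp8 : p % 8 = 3)
    (h : Odd l → ¬ IsSquare (-(p : ZMod l))) : legendreSym p l = -1 := by
  have hp2 : p ≠ 2 := by rintro rfl; norm_num at hp8
  by_cases hl2 : l = 2
  · subst hl2
    rw [legendreSym.eq_neg_one_iff]
    have := ZMod.exists_sq_eq_two_iff hp2
    push_cast
    rw [this]; omega
  have hl : l.Prime := Fact.out
  have hodd := hl.odd_of_ne_two hl2
  have h1 : legendreSym l (-1 * p) = -1 := by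
    rw [legendreSym.eq_neg_one_iff]; push_cast; simpa using h hodd
  rw [legendreSym.mul, legendreSym.at_neg_one hl2] at h1
  have : l % 4 = 1 ∨ l % 4 = 3 := by have := Nat.odd_iff.1 hodd; omega
  rcases this with h4 | h4
  · rw [ZMod.χ₄_nat_one_mod_four h4, one_mul] at h1
    rw [legendreSym.quadratic_reciprocity_one_mod_four h4 hp2, h1]
  · rw [ZMod.χ₄_nat_three_mod_four h4] at h1
    rw [legendreSym.quadratic_reciprocity_three_mod_four h4 (by omega)]
    linarith

theorem iso_p (p d r : ℕ) [Fact p.Prime] (hr : 1 ≤ r) (ps : Fin (2 * r - 1) → ℕ)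
    (hps : ∀ i, (ps i).Prime) (hd : d = ∏ i, ps i) (hpd : ¬ p ∣ d) (hp8 : p % 8 = 3)
    (hnr : ∀ i, Odd (ps i) → ¬ IsSquare (-(p : ZMod (ps i)))) :
    ∃ x y : ℚ_[p], x^2 + (p : ℚ_[p])*y^2 + d = 0 := by
  have hp2 : p ≠ 2 := by rintro rfl; norm_num at hp8
  have hd' : (d : ZMod p) ≠ 0 := by rwa [Ne, ZMod.natCast_eq_zero_iff]
  have h1 : ∀ i, quadraticChar (ZMod p) (ps i : ZMod p) = -1 := by
    intro i
    have : Fact (ps i).Prime := ⟨hps i⟩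
    have := leg_neg p (ps i) hp8 (hnr i)
    simpa [legendreSym] using this
  have h2 : legendreSym p (-1 * d) = 1 := by
    rw [legendreSym.mul, legendreSym.at_neg_one hp2, ZMod.χ₄_nat_three_mod_four (by omega)]
    have : legendreSym p d = -1 := by
      rw [legendreSym, hd]
      push_cast
      rw [map_prod, Finset.prod_congr rfl (fun i _ => h1 i)]
      simp only [Finset.prod_const, Finset.card_univ, Fintype.card_fin]
      exact Odd.neg_one_pow ⟨r - 1, by omega⟩
    rw [this]; norm_num
  rw [legendreSym.eq_one_iff p (by push_cast; simpa using hd')] at h2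
  obtain ⟨s, hs⟩ := h2
  push_cast at hs
  obtain ⟨t, ht⟩ := sq_odd p hp2 (-d) s
    (by rintro rfl; apply hd'; simpa using hs) (by simp only [map_neg, map_natCast]; linear_combination hs)
  refine ⟨t, 0, ?_⟩
  have ht' : (t : ℚ_[p])^2 = -d := by exact_mod_cast congrArg (Subtype.val) ht
  rw [ht']; ring

theorem stmt_8 (r : ℕ) (hr : 1 ≤ r) (ps : Fin (2 * r - 1) → ℕ)
    (hps : ∀ i, (ps i).Prime) (hinj : Function.Injective ps)
    (d : ℕ) (hd : d = ∏ i, ps i)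
    (p : ℕ) (hp : p.Prime) (hpd : ¬ p ∣ d) (hp8 : p % 8 = 3)
    (hnr : ∀ i, Odd (ps i) → ¬ IsSquare (-(p : ZMod (ps i)))) :
    (∀ (q : ℕ) [Fact q.Prime],
      IsDivisionRingPred ℍ[ℚ_[q], -(p : ℚ_[q]), -(d : ℚ_[q])] ↔ q ∣ d) ∧
    IsDivisionRingPred ℍ[ℝ, -(p : ℝ), -(d : ℝ)] := by
  have hd0 : 0 < d := by
    rw [hd]; exact Finset.prod_pos fun i _ => (hps i).pos
  refine ⟨?_, ?_⟩
  · intro q _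
    have hq : q.Prime := Fact.out
    rw [div_iff]
    constructor
    · intro h
      by_contra hqd
      obtain ⟨x, y, hxy⟩ : ∃ x y : ℚ_[q], x^2 + (p : ℚ_[q])*y^2 + d = 0 := by
        by_cases hq2 : q = 2
        · subst hq2; exact iso_two p d hp8 hqd
        by_cases hqp : q = p
        · subst hqp; exact iso_p q d r hr ps hps hd hpd hp8 hnr
        exact iso_odd q p d hq2 (fun h => hqp ((Nat.prime_dvd_prime_iff_eq hq hp).1 h)) hqd
      have := h x y 1 0 (by linear_combination hxy)
      exact one_ne_zero this.2.2.1
    · intro hqd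
      have hqd' := hqd
      rw [hd, hq.prime.dvd_finsetProd_iff] at hqd'
      obtain ⟨i, -, hi⟩ := hqd'
      have hi := (Nat.prime_dvd_prime_iff_eq hq (hps i)).1 hi
      have hm : ¬ q ∣ ∏ j ∈ Finset.univ.erase i, ps j := by
        rw [hq.prime.dvd_finsetProd_iff]
        rintro ⟨j, hj, hqj⟩
        have hj' := (Nat.prime_dvd_prime_iff_eq hq (hps j)).1 hqj
        exact (Finset.mem_erase.1 hj).1 (hinj (hj'.symm.trans hi))
      have hdm : d = q * ∏ j ∈ Finset.univ.erase i, ps j := by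
        rw [hd, hi, Finset.mul_prod_erase _ _ (Finset.mem_univ i)]
      refine fun x y z w h => aniso q p d ?_ _ hdm hm x y z w h
      by_cases hq2 : q = 2
      · subst hq2; exact even_two' p hp8
      · subst hi
        exact even_odd _ p (hnr i (hq.odd_of_ne_two hq2))
  · rw [div_iff]
    intro x y z w h
    have hp0 : (0:ℝ) < p := by exact_mod_cast hp.pos
    have hd1 : (0:ℝ) < d := by exact_mod_cast hd0
    have a1 := sq_nonneg x
    have a2 := mul_nonneg hp0.le (sq_nonneg y)
    have a3 := mul_nonneg hd1.le (sq_nonneg z)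
    have a4 := mul_nonneg hd1.le (mul_nonneg hp0.le (sq_nonneg w))
    rw [mul_add] at h
    have b1 : x^2 = 0 := by linarith
    have b2 : (p:ℝ) * y^2 = 0 := by linarith
    have b3 : (d:ℝ) * z^2 = 0 := by linarith
    have b4 : (d:ℝ) * (p * w^2) = 0 := by linarith
    simp only [mul_eq_zero, hp0.ne', hd1.ne', false_or, pow_eq_zero_iff two_ne_zero] at b1 b2 b3 b4
    exact ⟨b1, b2, b3, b4⟩
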